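/- Let $G$ be a finite group acting freely and measurably on a measurable space $X$, let $\nu$ be a $\sigma$-finite $G$-invariant measure on $X$ (that is, $\nu(gB)=\nu(B)$ for all $g\in G$ and all measurable $B\subseteq X$), and let $P$ and $Q$ be probability measures on $X$ that have densities with respect to $\nu$. For $g\in G$ let $P_g$ and $Q_g$ denote the pushforwards of $P$ and $Q$ under $x\mapsto gx$. Let $m:X\to M$ be a maximal invariant, that is, a measurable map into a measurable space $M$ such that $m(gx)=m(x)$ for all $g\in G$, $x\in X$, and such that $m(x)=m(y)$ implies $y=gx$ for some $g\in G$; let $P^M$ and $Q^M$ be the pushforwards of $P$ and $Q$ under $m$ (they are also those of every $P_g$ and $Q_g$). Assume that either $X$ is a standard Borel space and $M$ is countably separated (countably many measurable sets separate the points of $M$; for example, $M$ is standard Borel), or, for general $X$ and $M$, every measurable $G$-invariant subset of $X$ has the form $m^{-1}(B)$ with $B\subseteq M$ measurable (for example, $M=X/G$ with the quotient $\sigma$-algebra). Then the minimum over all pairs of probability vectors $(\Pi_0,\Pi_1)$ on $G$ of the Kullback–Leibler divergence $$\mathrm{KL}\Big(\sum_{g\in G}\Pi_1(g)\,Q_g,\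 \sum_{g\in G}\Pi_0(g)\,P_g\Big)\in[0,\infty]$$ exists and equals $\mathrm{KL}(Q^M,P^M)$, and it is attained when $\Pi_0$ and $\Pi_1$ are both the uniform distribution on $G$. -/

import Mathlib

open MeasureTheory

/-- A measurable map `m : X → M` is a maximal invariant for the action of `G` on `X` if it is
constant on orbits and separates distinct orbits. -/
structure IsMaximalInvariant (G : Type*) {X M : Type*} [Group G] [MulAction G X]
    [MeasurableSpace X] [MeasurableSpace M] (m : X → M) : Prop where
  measurable : Measurable m
  invariant : ∀ (g : G) (x : X), m (g • x) = m x
  maximal : ∀ x y : X, m x = m y → ∃ g : G, y = g • x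

/-- The σ-algebra of `M` is rich enough for the orbit space: every measurable `G`-invariant subset
of `X` is the preimage under `m` of a measurable subset of `M`.
For a maximal invariant `m` onto `M` this says that `M` carries the quotient σ-algebra. -/
def GeneratesInvariantSets (G : Type*) {X M : Type*} [Group G] [MulAction G X]
    [MeasurableSpace X] [MeasurableSpace M] (m : X → M) : Prop :=
  ∀ A : Set X, MeasurableSet A → (∀ (g : G), ∀ x ∈ A, g • x ∈ A) →
    ∃ B : Set M, MeasurableSet B ∧ m ⁻¹' B = A

/-- The mixture `∑ g, w g • (g • ·)_* R` of the translates of a measure `R`. -/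
noncomputable def translateMixture {G X : Type*} [Group G] [Fintype G] [MulAction G X]
    [MeasurableSpace X] (w : G → ENNReal) (R : Measure X) : Measure X :=
  ∑ g : G, w g • R.map (fun x => g • x)

/-!
A `G`-invariant statistic does not distinguish `μ` from any of its translates, so every mixture of
the translates has the same image under `m` as `μ`, and the data-processing inequality gives the
lower bound. For the uniform mixtures the inequality is an equality because `m` is then sufficient:
integrating `f` against the uniform mixture of `μ` amounts to integrating its orbit average against
`μ`, the orbit average factors through `m`, and hence the density of the image measures, composed
with `m`, is already a density of the uniform mixtures themselves.
-/

open InformationTheory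
open scoped ENNReal

section KullbackLeibler

variable {α β : Type*} [MeasurableSpace α] [mβ : MeasurableSpace β] {μ ν : Measure α}
  {f : α → β} {φ : β → ℝ≥0∞}

theorem klDiv_withDensity [IsFiniteMeasure ν] {φ : α → ℝ≥0∞} (hφ : Measurable φ)
    [IsFiniteMeasure (ν.withDensity φ)] :
    klDiv (ν.withDensity φ) ν = ∫⁻ x, ENNReal.ofReal (klFun (φ x).toReal) ∂ν := by
  rw [klDiv_eq_lintegral_klFun_of_ac (withDensity_absolutelyContinuous ν φ)]
  refine lintegral_congr_ae ?_
  filter_upwards [ν.rnDeriv_withDensity hφ] with x hx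
  rw [hx]

theorem map_withDensity_comp (hf : Measurable f) (hφ : Measurable φ) :
    (ν.withDensity (φ ∘ f)).map f = (ν.map f).withDensity φ := by
  ext B hB
  rw [Measure.map_apply hf hB, withDensity_apply _ (hf hB), withDensity_apply _ hB,
    setLIntegral_map hB hφ hf]
  rfl

theorem klDiv_map_of_eq_withDensity_comp [IsFiniteMeasure μ] [IsFiniteMeasure ν]
    (hf : Measurable f) (hφ : Measurable φ) (hμ : μ = ν.withDensity (φ ∘ f)) :
    klDiv (μ.map f) (ν.map f) = klDiv μ ν := by
  subst hμ
  have hmap : (ν.withDensity (φ ∘ f)).map f = (ν.map f).withDensity φ :=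
    map_withDensity_comp hf hφ
  have : IsFiniteMeasure ((ν.map f).withDensity φ) := hmap ▸ inferInstance
  rw [hmap, klDiv_withDensity hφ, klDiv_withDensity (hφ.comp hf), lintegral_map (by fun_prop) hf]
  rfl

theorem lintegral_eq_lintegral_rnDeriv_map_mul
    [(μ.map f).HaveLebesgueDecomposition (ν.map f)]
    (hf : Measurable f) (hac : μ.map f ≪ ν.map f) {h : α → ℝ≥0∞}
    (hh : Measurable[mβ.comap f] h) :
    ∫⁻ x, h x ∂μ = ∫⁻ x, (μ.map f).rnDeriv (ν.map f) (f x) * h x ∂ν := by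
  obtain ⟨k, hk, rfl⟩ := hh.exists_eq_measurable_comp
  calc ∫⁻ x, k (f x) ∂μ
      = ∫⁻ y, k y ∂(μ.map f) := (lintegral_map hk hf).symm
    _ = ∫⁻ y, (μ.map f).rnDeriv (ν.map f) y * k y ∂(ν.map f) :=
      (lintegral_rnDeriv_mul hac hk.aemeasurable).symm
    _ = ∫⁻ x, (μ.map f).rnDeriv (ν.map f) (f x) * k (f x) ∂ν := lintegral_map (by fun_prop) hf

end KullbackLeibler

section InvariantSets

variable {G : Type*} [Group G] {X : Type*} [MeasurableSpace X] [MulAction G X]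
  {M : Type*} [mM : MeasurableSpace M] {m : X → M}

theorem IsMaximalInvariant.preimage_image_eq (hm : IsMaximalInvariant G m) {A : Set X}
    (hA : ∀ (g : G), ∀ x ∈ A, g • x ∈ A) : m ⁻¹' (m '' A) = A := by
  refine (Set.subset_preimage_image m A).antisymm' ?_
  rintro x ⟨y, hy, hyx⟩
  obtain ⟨g, rfl⟩ := hm.maximal y x hyx
  exact hA g y hy

theorem IsMaximalInvariant.generatesInvariantSets [StandardBorelSpace X]
    [MeasurableSpace.CountablySeparated M] (hm : IsMaximalInvariant G m) :
    GeneratesInvariantSets G m := by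
  intro A hA hinv
  have hpre : m ⁻¹' (m '' A) = A := hm.preimage_image_eq hinv
  have : MeasurableSpace.CountablySeparated (Set.range m) :=
    MeasurableSpace.Subtype.countablySeparated
  -- By Lusin separation, a subset of the range of `m` is measurable as soon as its preimage is.
  obtain ⟨B, hB, hBA⟩ : MeasurableSet (Subtype.val ⁻¹' (m '' A) : Set (Set.range m)) :=
    hm.measurable.measurableSet_preimage_iff_preimage_val.1 (by rwa [hpre])
  refine ⟨B, hB, ?_⟩
  rw [← hpre]
  ext x
  exact Set.ext_iff.1 hBA ⟨m x, x, rfl⟩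

theorem GeneratesInvariantSets.measurable_comap (hgen : GeneratesInvariantSets G m)
    {Z : Type*} [MeasurableSpace Z] {h : X → Z} (hh : Measurable h)
    (hinv : ∀ (g : G) (x : X), h (g • x) = h x) : Measurable[mM.comap m] h :=
  fun S hS => hgen (h ⁻¹' S) (hh hS) fun g x hx => by rwa [Set.mem_preimage, hinv]

end InvariantSets

section TranslateMixture

variable {G : Type*} [Group G] [Fintype G] {X : Type*} [MeasurableSpace X] [MulAction G X]
  [MeasurableConstSMul G X] {M : Type*} [MeasurableSpace M] {m : X → M} {w w₀ w₁ : G → ℝ≥0∞}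

theorem lintegral_translateMixture (w : G → ℝ≥0∞) (μ : Measure X) {f : X → ℝ≥0∞}
    (hf : Measurable f) :
    ∫⁻ x, f x ∂(translateMixture w μ) = ∑ g, w g * ∫⁻ x, f (g • x) ∂μ := by
  simp only [translateMixture, lintegral_finsetSum_measure, lintegral_smul_measure, smul_eq_mul,
    lintegral_map hf (measurable_const_smul _)]

theorem map_translateMixture (hm : Measurable m) (hinv : ∀ (g : G) (x : X), m (g • x) = m x)
    (w : G → ℝ≥0∞) (μ : Measure X) :
    (translateMixture w μ).map m = (∑ g, w g) • μ.map m := by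
  have hmap (g : G) : (μ.map fun x => g • x).map m = μ.map m := by
    rw [Measure.map_map hm (measurable_const_smul g)]
    exact congrArg μ.map (funext (hinv g))
  simp only [translateMixture, Measure.map_finset_sum hm.aemeasurable, Measure.map_smul, hmap,
    Finset.sum_smul]

theorem isFiniteMeasure_translateMixture (hw : ∑ g, w g ≠ ∞) (μ : Measure X)
    [IsFiniteMeasure μ] : IsFiniteMeasure (translateMixture w μ) := by
  refine ⟨?_⟩
  rw [← lintegral_one, lintegral_translateMixture w μ measurable_const,
    ← Finset.sum_mul, lintegral_one]
  exact ENNReal.mul_lt_top hw.lt_top (measure_lt_top μ _)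

theorem klDiv_map_le_klDiv_translateMixture (hm : Measurable m)
    (hinv : ∀ (g : G) (x : X), m (g • x) = m x) (hw₀ : ∑ g, w₀ g = 1) (hw₁ : ∑ g, w₁ g = 1)
    (P Q : Measure X) [IsFiniteMeasure P] [IsFiniteMeasure Q] :
    klDiv (Q.map m) (P.map m) ≤ klDiv (translateMixture w₁ Q) (translateMixture w₀ P) := by
  have := isFiniteMeasure_translateMixture (hw₀ ▸ ENNReal.one_ne_top) P
  have := isFiniteMeasure_translateMixture (hw₁ ▸ ENNReal.one_ne_top) Q
  simpa only [map_translateMixture hm hinv, hw₀, hw₁, one_smul] using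
    klDiv_map_le (translateMixture w₁ Q) (translateMixture w₀ P) hm

end TranslateMixture

section UniformMixture

theorem sum_inv_card (ι : Type*) [Fintype ι] [Nonempty ι] :
    ∑ _i : ι, (Fintype.card ι : ℝ≥0∞)⁻¹ = 1 := by
  simp [ENNReal.mul_inv_cancel]

variable (G : Type*) [Group G] [Fintype G] {X : Type*} [MulAction G X]

/-- The average of `f` over the orbit of `x`, an invariant function whose integral against `μ` is
that of `f` against the uniform mixture of the translates of `μ`. It averages over `G`, so points of
the orbit are counted with multiplicity when the action is not free. -/
noncomputable def orbitAverage (f : X → ℝ≥0∞) (x : X) : ℝ≥0∞ :=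
  ∑ g : G, (Fintype.card G : ℝ≥0∞)⁻¹ * f (g • x)

/-- The mixture of the translates of `μ` with uniform weights, the one attaining the minimal
divergence. -/
noncomputable abbrev uniformTranslateMixture [MeasurableSpace X] (μ : Measure X) : Measure X :=
  translateMixture (fun _ : G => (Fintype.card G : ℝ≥0∞)⁻¹) μ

variable {G}

theorem orbitAverage_smul (f : X → ℝ≥0∞) (h : G) (x : X) :
    orbitAverage G f (h • x) = orbitAverage G f x :=
  Fintype.sum_equiv (Equiv.mulRight h) _ _ fun g => by
    rw [Equiv.coe_mulRight, mul_smul]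

theorem orbitAverage_mul_of_invariant {φ : X → ℝ≥0∞} (hφ : ∀ (g : G) (x : X), φ (g • x) = φ x)
    (f : X → ℝ≥0∞) (x : X) :
    orbitAverage G (fun y => φ y * f y) x = φ x * orbitAverage G f x := by
  simp only [orbitAverage, hφ, Finset.mul_sum, mul_left_comm]

variable [MeasurableSpace X] [MeasurableConstSMul G X] {M : Type*} [MeasurableSpace M] {m : X → M}

theorem measurable_orbitAverage {f : X → ℝ≥0∞} (hf : Measurable f) :
    Measurable (orbitAverage G f) :=
  Finset.measurable_sum _ fun g _ => (hf.comp (measurable_const_smul g)).const_mul _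

theorem lintegral_uniformTranslateMixture (μ : Measure X) {f : X → ℝ≥0∞} (hf : Measurable f) :
    ∫⁻ x, f x ∂(uniformTranslateMixture G μ) = ∫⁻ x, orbitAverage G f x ∂μ := by
  have hterm (g : G) : Measurable fun x => f (g • x) := hf.comp (measurable_const_smul g)
  simp only [lintegral_translateMixture _ μ hf, orbitAverage,
    lintegral_finsetSum _ fun g _ => (hterm g).const_mul _, lintegral_const_mul _ (hterm _)]

theorem uniformTranslateMixture_eq_withDensity (hm : Measurable m)
    (hinv : ∀ (g : G) (x : X), m (g • x) = m x) (hgen : GeneratesInvariantSets G m)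
    {P Q : Measure X} [IsFiniteMeasure P] [IsFiniteMeasure Q] (hac : Q.map m ≪ P.map m) :
    uniformTranslateMixture G Q =
      (uniformTranslateMixture G P).withDensity ((Q.map m).rnDeriv (P.map m) ∘ m) := by
  set φ := (Q.map m).rnDeriv (P.map m)
  have hφm : Measurable (φ ∘ m) := (Measure.measurable_rnDeriv _ _).comp hm
  refine Measure.ext_of_lintegral _ fun f hf => ?_
  have havg : Measurable[MeasurableSpace.comap m inferInstance] (orbitAverage G f) :=
    hgen.measurable_comap (measurable_orbitAverage hf) (orbitAverage_smul f)
  calc ∫⁻ x, f x ∂(uniformTranslateMixture G Q)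
      = ∫⁻ x, orbitAverage G f x ∂Q := lintegral_uniformTranslateMixture Q hf
    _ = ∫⁻ x, φ (m x) * orbitAverage G f x ∂P :=
      lintegral_eq_lintegral_rnDeriv_map_mul hm hac havg
    _ = ∫⁻ x, orbitAverage G (fun y => φ (m y) * f y) x ∂P :=
      lintegral_congr fun x =>
        (orbitAverage_mul_of_invariant (φ := φ ∘ m) (fun g y => congrArg φ (hinv g y)) f x).symm
    _ = ∫⁻ x, φ (m x) * f x ∂(uniformTranslateMixture G P) :=
      (lintegral_uniformTranslateMixture P (hφm.mul hf)).symm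
    _ = ∫⁻ x, f x ∂(uniformTranslateMixture G P).withDensity (φ ∘ m) :=
      (lintegral_withDensity_eq_lintegral_mul _ hφm hf).symm

theorem klDiv_uniformTranslateMixture (hm : Measurable m)
    (hinv : ∀ (g : G) (x : X), m (g • x) = m x) (hgen : GeneratesInvariantSets G m)
    (P Q : Measure X) [IsFiniteMeasure P] [IsFiniteMeasure Q] :
    klDiv (uniformTranslateMixture G Q) (uniformTranslateMixture G P) =
      klDiv (Q.map m) (P.map m) := by
  have hsum : ∑ _g : G, (Fintype.card G : ℝ≥0∞)⁻¹ = 1 := sum_inv_card G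
  by_cases hac : Q.map m ≪ P.map m
  · have hfin (μ : Measure X) [IsFiniteMeasure μ] : IsFiniteMeasure (uniformTranslateMixture G μ) :=
      isFiniteMeasure_translateMixture (hsum ▸ ENNReal.one_ne_top) μ
    have hmap (μ : Measure X) : (uniformTranslateMixture G μ).map m = μ.map m := by
      rw [map_translateMixture hm hinv, hsum, one_smul]
    have := hfin P
    have := hfin Q
    rw [← klDiv_map_of_eq_withDensity_comp hm (Measure.measurable_rnDeriv _ _)
      (uniformTranslateMixture_eq_withDensity hm hinv hgen hac), hmap, hmap]
  · have hle := klDiv_map_le_klDiv_translateMixture hm hinv hsum hsum P Q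
    rw [klDiv_of_not_ac hac] at hle ⊢
    exact top_le_iff.1 hle

theorem finite_group_kl_min_eq_kl_maximal_invariant_general (hm : Measurable m)
    (hinv : ∀ (g : G) (x : X), m (g • x) = m x) (hgen : GeneratesInvariantSets G m)
    (P Q : Measure X) [IsFiniteMeasure P] [IsFiniteMeasure Q] :
    IsLeast
      {r : ℝ≥0∞ | ∃ w₀ w₁ : G → ℝ≥0∞, ∑ g, w₀ g = 1 ∧ ∑ g, w₁ g = 1 ∧
        r = klDiv (translateMixture w₁ Q) (translateMixture w₀ P)}
      (klDiv (Q.map m) (P.map m)) ∧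
    klDiv (uniformTranslateMixture G Q) (uniformTranslateMixture G P) =
      klDiv (Q.map m) (P.map m) := by
  have hunif := klDiv_uniformTranslateMixture hm hinv hgen P Q
  refine ⟨⟨⟨_, _, sum_inv_card G, sum_inv_card G, hunif.symm⟩, ?_⟩, hunif⟩
  rintro r ⟨w₀, w₁, hw₀, hw₁, rfl⟩
  exact klDiv_map_le_klDiv_translateMixture hm hinv hw₀ hw₁ P Q

end UniformMixture

theorem finite_group_kl_min_eq_kl_maximal_invariant
    {G : Type*} [Group G] [Fintype G]
    {X : Type*} [MeasurableSpace X] [MulAction G X]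
    (hmeas : ∀ g : G, Measurable fun x : X => g • x)
    (hfree : ∀ (g : G) (x : X), g • x = x → g = 1)
    (ν : Measure X) [SigmaFinite ν]
    (hν : ∀ (g : G) (B : Set X), MeasurableSet B → ν ((fun x => g • x) '' B) = ν B)
    (P Q : Measure X) [IsProbabilityMeasure P] [IsProbabilityMeasure Q]
    (hPν : P ≪ ν) (hQν : Q ≪ ν)
    {M : Type*} [MeasurableSpace M] (m : X → M) (hm : IsMaximalInvariant G m)
    (hreg : (StandardBorelSpace X ∧ MeasurableSpace.CountablySeparated M) ∨
      GeneratesInvariantSets G m) :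
    IsLeast
      {r : ENNReal | ∃ w₀ w₁ : G → ENNReal, ∑ g, w₀ g = 1 ∧ ∑ g, w₁ g = 1 ∧
        r = InformationTheory.klDiv (translateMixture w₁ Q) (translateMixture w₀ P)}
      (InformationTheory.klDiv (Q.map m) (P.map m)) ∧
    InformationTheory.klDiv
        (translateMixture (fun _ : G => (Fintype.card G : ENNReal)⁻¹) Q)
        (translateMixture (fun _ : G => (Fintype.card G : ENNReal)⁻¹) P)
      = InformationTheory.klDiv (Q.map m) (P.map m) := by
  have : MeasurableConstSMul G X := ⟨hmeas⟩
  exact finite_group_kl_min_eq_kl_maximal_invariant_general hm.measurable hm.invariant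
    (hreg.elim (fun ⟨_, _⟩ => hm.generatesInvariantSets) id) P Q
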